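/- For all n ≥ 1 and 0 ≤ k ≤ n-1, the complement of the generalized crown graph S_{n-k}^k is word-representable. -/

import Mathlib

/-- Two distinct letters `x` and `y` alternate in the word `w` if, after deleting all
letters other than `x` and `y`, no two consecutive letters of the remaining word are equal. -/
def Alternate {V : Type*} [DecidableEq V] (w : List V) (x y : V) : Prop :=
  (w.filter fun z => decide (z = x ∨ z = y)).Chain' (· ≠ ·)

/-- A word `w` represents the simple graph `G` if every vertex occurs in `w` at least once
and two distinct vertices alternate in `w` exactly when they are adjacent in `G`. -/
def Represents {V : Type*} [DecidableEq V] (G : SimpleGraph V) (w : List V) : Prop :=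
  (∀ v : V, v ∈ w) ∧ ∀ x y : V, x ≠ y → (Alternate w x y ↔ G.Adj x y)

/-- A simple graph is word-representable if some word represents it. -/
def WordRepresentable {V : Type*} [DecidableEq V] (G : SimpleGraph V) : Prop :=
  ∃ w : List V, Represents G w

/-- The generalized crown graph `S_{n-k}^k`: a bipartite graph on vertex set
`{x_1, …, x_n} ∪ {y_1, …, y_n}` (encoded as `Fin n ⊕ Fin n`) in which `x i` and `y j` are
adjacent iff `j` is not congruent to any of `i, i+1, …, i+k` modulo `n`. -/
def genCrownGraph (n k : ℕ) : SimpleGraph (Fin n ⊕ Fin n) :=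
  SimpleGraph.fromRel fun u v =>
    match u, v with
    | Sum.inl i, Sum.inr j => ∀ l : ℕ, l ≤ k → ¬ ((j : ℕ) ≡ (i : ℕ) + l [MOD n])
    | _, _ => False

/-!
A word is determined by the sets of positions its letters occupy, and two letters alternate exactly
when their sets interlace. Every letter is given three positions. The letters `x_i` are read
periodically, at the times `i`, `i + n`, `i + 2n`. The letter `y_j` follows `x_j` immediately in the
first round, but then all the `y`-letters pause once for `p = n - 1 - k` steps, so that `y_j` is
read just after the times `j`, `j + n + p`, `j + 2n + p`. Within each family the cyclic order
never changes, so any two letters of the same family alternate. Before the pause `x_i` and `y_j`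
always alternate; they go on alternating after it exactly when the pause does not move `y_j` past
an occurrence of `x_i`, that is, when `j` lies in the cyclic window `i, i + 1, …, i + k`.
-/

/-- Two sets of positions interlace if any two positions of either set are separated by a position
of the other: this is alternation of two letters, expressed by the positions they occupy. -/
def Interlace {α : Type*} [LT α] (s t : Set α) : Prop :=
  (∀ a ∈ s, ∀ b ∈ s, a < b → ∃ c ∈ t, a < c ∧ c < b) ∧
    ∀ a ∈ t, ∀ b ∈ t, a < b → ∃ c ∈ s, a < c ∧ c < b

theorem interlace_comm {α : Type*} [LT α] {s t : Set α} : Interlace s t ↔ Interlace t s :=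
  and_comm

theorem interlace_triple_iff {α : Type*} [LinearOrder α] {a₀ a₁ a₂ b₀ b₁ b₂ : α}
    (ha₀ : a₀ < a₁) (ha₁ : a₁ < a₂) (hb₀ : b₀ < b₁) (hb₁ : b₁ < b₂) :
    Interlace {a₀, a₁, a₂} {b₀, b₁, b₂} ↔
      (a₀ < b₀ ∧ b₀ < a₁ ∧ a₁ < b₁ ∧ b₁ < a₂ ∧ a₂ < b₂) ∨
        (b₀ < a₀ ∧ a₀ < b₁ ∧ b₁ < a₁ ∧ a₁ < b₂ ∧ b₂ < a₂) := by
  simp only [Interlace, Set.mem_insert_iff, Set.mem_singleton_iff, forall_eq_or_imp, forall_eq,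
    exists_eq_or_imp, exists_eq_left]
  grind

theorem isChain_ne_map_iff {α V : Type*} [Preorder α] {l : List α} (hl : l.SortedLT)
    (f : α → V) :
    (l.map f).IsChain (· ≠ ·) ↔
      ∀ a ∈ l, ∀ b ∈ l, a < b → f a = f b → ∃ c ∈ l, a < c ∧ c < b ∧ f c ≠ f a := by
  have getElem_lt_iff {r s : ℕ} (hr : r < l.length) (hs : s < l.length) : l[r] < l[s] ↔ r < s :=
    hl.strictMono_get.lt_iff_lt (a := ⟨r, hr⟩) (b := ⟨s, hs⟩)
  rw [List.isChain_map]
  simp only [List.isChain_iff_getElem, List.forall_mem_iff_getElem, List.exists_mem_iff_getElem,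
    getElem_lt_iff]
  constructor
  · intro hchain r hr s hs hrs heq
    have succ_ne : s ≠ r + 1 := by
      rintro rfl
      exact hchain r hs heq
    exact ⟨r + 1, by omega, by omega, by omega, (hchain r (by omega)).symm⟩
  · intro hsep r hr heq
    obtain ⟨s, hs, hrs, hsr, -⟩ := hsep r (by omega) (r + 1) hr (by omega) heq
    omega

theorem alternate_map_iff {α V : Type*} [Preorder α] [DecidableEq V] {l : List α}
    (hl : l.SortedLT) (f : α → V) {x y : V} (hxy : x ≠ y) :
    Alternate (l.map f) x y ↔ Interlace {a | a ∈ l ∧ f a = x} {a | a ∈ l ∧ f a = y} := by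
  change ((l.map f).filter _).IsChain _ ↔ _
  rw [List.filter_map, isChain_ne_map_iff (hl.pairwise.filter _).sortedLT]
  simp only [Interlace, Set.mem_ofPred_eq, List.mem_filter, Function.comp_apply, decide_eq_true_eq]
  grind

theorem wordRepresentable_of_interlace {α V : Type*} [LinearOrder α] [Finite V] [DecidableEq V]
    {G : SimpleGraph V} (occ : V → Finset α) (nonempty : ∀ v, (occ v).Nonempty)
    (disjoint : Pairwise fun x y => Disjoint (occ x) (occ y))
    (interlace_iff : ∀ x y, x ≠ y → (Interlace (occ x : Set α) (occ y) ↔ G.Adj x y)) :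
    WordRepresentable G := by
  cases isEmpty_or_nonempty V
  · exact ⟨[], isEmptyElim, isEmptyElim⟩
  have := Fintype.ofFinite V
  let positions : Finset α := Finset.univ.biUnion occ
  have exists_letter : ∀ a ∈ positions, ∃ v, a ∈ occ v := by simp [positions]
  choose! letter mem_occ_letter using exists_letter
  have mem_occ_iff (a : α) (v : V) : a ∈ positions ∧ letter a = v ↔ a ∈ occ v := by
    refine ⟨fun ⟨ha, hv⟩ => hv ▸ mem_occ_letter a ha, fun hav => ?_⟩
    have ha : a ∈ positions := Finset.mem_biUnion.2 ⟨v, Finset.mem_univ v, hav⟩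
    refine ⟨ha, by_contra fun hne => ?_⟩
    exact Finset.disjoint_left.1 (disjoint hne) (mem_occ_letter a ha) hav
  refine ⟨(positions.sort).map letter, fun v => ?_, fun x y hxy => ?_⟩
  · obtain ⟨a, ha⟩ := nonempty v
    obtain ⟨ha_mem, rfl⟩ := (mem_occ_iff a v).2 ha
    exact List.mem_map_of_mem ((Finset.mem_sort _).2 ha_mem)
  · rw [alternate_map_iff positions.sortedLT_sort letter hxy, ← interlace_iff x y hxy]
    simp only [Finset.mem_sort, mem_occ_iff]
    rfl

/-- The positions of the letters in a word representing the complement of `genCrownGraph n k`, where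
`p = n - 1 - k` is the length of the pause of the `y`-letters. Times are doubled: `x`-letters occupy
even and `y`-letters odd positions. -/
def crownOccurrences (n p : ℕ) : Fin n ⊕ Fin n → Finset ℕ
  | Sum.inl i => {2 * (i : ℕ), 2 * (i + n), 2 * (i + 2 * n)}
  | Sum.inr j => {2 * (j : ℕ) + 1, 2 * (j + n + p) + 1, 2 * (j + 2 * n + p) + 1}

theorem crownOccurrences_nonempty (n p : ℕ) (v : Fin n ⊕ Fin n) :
    (crownOccurrences n p v).Nonempty := by
  cases v <;> exact Finset.insert_nonempty _ _

theorem crownOccurrences_disjoint (n p : ℕ) :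
    Pairwise fun u v => Disjoint (crownOccurrences n p u) (crownOccurrences n p v) := by
  rintro (i | i) (j | j) hij <;>
    simp only [ne_eq, Sum.inl.injEq, Sum.inr.injEq] at hij <;>
    simp only [crownOccurrences, Finset.disjoint_left, Finset.mem_insert, Finset.mem_singleton] <;>
    omega

theorem interlace_crownOccurrences_inl_inl {n p : ℕ} {i j : Fin n} (hij : i ≠ j) :
    Interlace (crownOccurrences n p (Sum.inl i) : Set ℕ) (crownOccurrences n p (Sum.inl j)) := by
  simp only [crownOccurrences, Finset.coe_insert, Finset.coe_singleton]
  rw [interlace_triple_iff] <;> omega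

theorem interlace_crownOccurrences_inr_inr {n p : ℕ} {i j : Fin n} (hij : i ≠ j) :
    Interlace (crownOccurrences n p (Sum.inr i) : Set ℕ) (crownOccurrences n p (Sum.inr j)) := by
  simp only [crownOccurrences, Finset.coe_insert, Finset.coe_singleton]
  rw [interlace_triple_iff] <;> omega

theorem interlace_crownOccurrences_inl_inr_iff {n p : ℕ} (i j : Fin n) :
    Interlace (crownOccurrences n p (Sum.inl i) : Set ℕ) (crownOccurrences n p (Sum.inr j)) ↔
      ((i : ℕ) ≤ j ∧ (j : ℕ) + p < i + n) ∨ (j : ℕ) + p < i := by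
  simp only [crownOccurrences, Finset.coe_insert, Finset.coe_singleton]
  rw [interlace_triple_iff] <;> omega

theorem modEq_iff_eq_or_eq_add {a b n : ℕ} (ha : a < n) (hb : b < 2 * n) :
    a ≡ b [MOD n] ↔ b = a ∨ b = a + n := by
  rw [Nat.ModEq, Nat.mod_eq_of_lt ha]
  obtain hbn | hnb := lt_or_ge b n
  · rw [Nat.mod_eq_of_lt hbn]
    omega
  · rw [Nat.mod_eq_sub_mod hnb, Nat.mod_eq_of_lt (by omega)]
    omega

theorem exists_modEq_add_iff {n k p i j : ℕ} (hp : k + 1 + p = n) (hi : i < n) (hj : j < n) :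
    (∃ l ≤ k, j ≡ i + l [MOD n]) ↔ (i ≤ j ∧ j + p < i + n) ∨ j + p < i := by
  have modEq_iff {l : ℕ} (hl : l ≤ k) : j ≡ i + l [MOD n] ↔ i + l = j ∨ i + l = j + n :=
    modEq_iff_eq_or_eq_add hj (by omega)
  constructor
  · rintro ⟨l, hl, h⟩
    rw [modEq_iff hl] at h
    omega
  · rintro (h | h)
    · exact ⟨j - i, by omega, (modEq_iff (by omega)).2 (by omega)⟩
    · exact ⟨j + n - i, by omega, (modEq_iff (by omega)).2 (by omega)⟩

theorem compl_genCrownGraph_adj_inl_inr_iff {n k : ℕ} (i j : Fin n) :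
    (genCrownGraph n k)ᶜ.Adj (Sum.inl i) (Sum.inr j) ↔ ∃ l ≤ k, (j : ℕ) ≡ i + l [MOD n] := by
  simp [genCrownGraph]

/-- For all `n ≥ 1` and `0 ≤ k ≤ n-1`, the complement of the generalized crown graph
`S_{n-k}^k` is word-representable. -/
theorem complement_genCrownGraph_wordRepresentable :
    ∀ n k : ℕ, 1 ≤ n → k ≤ n - 1 → WordRepresentable (genCrownGraph n k)ᶜ := by
  intro n k hn hk
  obtain ⟨p, hp⟩ : ∃ p, k + 1 + p = n := ⟨n - (k + 1), by omega⟩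
  have adj_iff (i j : Fin n) :
      Interlace (crownOccurrences n p (Sum.inl i) : Set ℕ) (crownOccurrences n p (Sum.inr j)) ↔
        (genCrownGraph n k)ᶜ.Adj (Sum.inl i) (Sum.inr j) := by
    rw [interlace_crownOccurrences_inl_inr_iff, compl_genCrownGraph_adj_inl_inr_iff,
      exists_modEq_add_iff hp i.isLt j.isLt]
  refine wordRepresentable_of_interlace (crownOccurrences n p) (crownOccurrences_nonempty n p)
    (crownOccurrences_disjoint n p) ?_
  rintro (i | i) (j | j) hij
  · exact iff_of_true (interlace_crownOccurrences_inl_inl (ne_of_apply_ne _ hij))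
      (by simpa [genCrownGraph] using hij)
  · exact adj_iff i j
  · rw [interlace_comm, SimpleGraph.adj_comm]
    exact adj_iff j i
  · exact iff_of_true (interlace_crownOccurrences_inr_inr (ne_of_apply_ne _ hij))
      (by simpa [genCrownGraph] using hij)
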